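/- arXiv:1809.07920 — 3 statements merged into one kernel-verified Lean document; each statement's English description precedes it below -/
import Mathlib

section
/- Let V be a nonempty finite type, let w be a conductance function on V whose support graph G_w is connected, and let L be its weighted Laplacian. If j : V → ℝ satisfies L j = δ_y − δ_z and j z = 0 for some y, z ∈ V, then 0 ≤ j x ≤ j y for every x ∈ V (the voltage attains its minimum at the grounded sink z and its maximum at the source y). -/
open Finset

/-!
Both bounds come from the maximum principle. Where a function attains its maximum, its Laplacian is
a sum of nonnegative terms; if the Laplacian is also nonpositive there, all these terms vanish and
every neighbour is a maximum point too. So a maximum propagates along edges until it reaches a point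
where the Laplacian may be positive. For the voltage that point is the source, and for its negative
it is the sink.
-/

section WeightedLaplacian

variable {V R : Type*} [Fintype V] [CommRing R]

/-- The Laplacian of the network on `V` with conductances `w`, which need not be symmetric: `w x y`
belongs to the edge from `x` to `y`. In the sign convention used here it is positive semidefinite
for symmetric nonnegative `w`. -/
def weightedLaplacian (w : V → V → R) : (V → R) →ₗ[R] V → R where
  toFun f x := ∑ y, w x y * (f x - f y)
  map_add' f g := by
    ext x
    simp only [Pi.add_apply, ← sum_add_distrib]
    exact sum_congr rfl fun y _ => by ring
  map_smul' c f := by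
    ext x
    simp only [Pi.smul_apply, smul_eq_mul, RingHom.id_apply, mul_sum]
    exact sum_congr rfl fun y _ => by ring

lemma weightedLaplacian_apply (w : V → V → R) (f : V → R) (x : V) :
    weightedLaplacian w f x = ∑ y, w x y * (f x - f y) :=
  rfl

variable [LinearOrder R] [IsStrictOrderedRing R] {w : V → V → R} {f : V → R}

lemma eq_of_forall_le_of_weightedLaplacian_nonpos {x y : V} (hw : 0 ≤ w x)
    (hmax : ∀ v, f v ≤ f x) (hf : weightedLaplacian w f x ≤ 0) (hxy : 0 < w x y) :
    f y = f x := by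
  have hterm : ∀ v ∈ univ, 0 ≤ w x v * (f x - f v) := fun v _ =>
    mul_nonneg (hw v) (sub_nonneg.2 (hmax v))
  have hsum : ∑ v, w x v * (f x - f v) = 0 := le_antisymm hf (sum_nonneg hterm)
  have hzero : w x y * (f x - f y) = 0 := (sum_eq_zero_iff_of_nonneg hterm).1 hsum y (mem_univ y)
  exact (sub_eq_zero.1 ((mul_eq_zero.1 hzero).resolve_left hxy.ne')).symm

lemma exists_mem_ge_of_weightedLaplacian_nonpos {S : Set V} (hw : 0 ≤ w)
    (hS : ∀ x, ∃ s ∈ S, Relation.ReflTransGen (0 < w · ·) x s)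
    (hf : ∀ x ∉ S, weightedLaplacian w f x ≤ 0) (x : V) : ∃ s ∈ S, f x ≤ f s := by
  have : Nonempty V := ⟨x⟩
  obtain ⟨m, hm⟩ := Finite.exists_max f
  obtain ⟨s, hs, hms⟩ := hS m
  suffices hmax : ∃ t ∈ S, f m ≤ f t from
    hmax.imp fun t ht => ⟨ht.1, (hm x).trans ht.2⟩
  induction hms using Relation.ReflTransGen.head_induction_on with
  | refl => exact ⟨s, hs, le_rfl⟩
  | @head u v huv _ ih =>
    by_cases hu : u ∈ S
    · exact ⟨u, hu, le_rfl⟩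
    · have hvu : f v = f u :=
        eq_of_forall_le_of_weightedLaplacian_nonpos (hw u) hm (hf u hu) huv
      exact hvu ▸ ih fun t => hvu ▸ hm t

lemma exists_mem_le_of_weightedLaplacian_nonneg {S : Set V} (hw : 0 ≤ w)
    (hS : ∀ x, ∃ s ∈ S, Relation.ReflTransGen (0 < w · ·) x s)
    (hf : ∀ x ∉ S, 0 ≤ weightedLaplacian w f x) (x : V) : ∃ s ∈ S, f s ≤ f x := by
  have hneg : ∀ v ∉ S, weightedLaplacian w (-f) v ≤ 0 := fun v hv => by
    rw [map_neg, Pi.neg_apply]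
    exact neg_nonpos.2 (hf v hv)
  obtain ⟨s, hs, hxs⟩ := exists_mem_ge_of_weightedLaplacian_nonpos hw hS hneg x
  exact ⟨s, hs, neg_le_neg_iff.1 hxs⟩

theorem stmt_2_general [DecidableEq V] (hw : 0 ≤ w) {y z : V}
    (hy : ∀ x, Relation.ReflTransGen (0 < w · ·) x y)
    (hz : ∀ x, Relation.ReflTransGen (0 < w · ·) x z)
    (hf : weightedLaplacian w f = Pi.single y 1 - Pi.single z 1) (x : V) :
    f z ≤ f x ∧ f x ≤ f y := by
  have hδ (a v : V) : 0 ≤ (Pi.single a 1 : V → R) v := by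
    rw [Pi.single_apply]
    positivity
  have hsub : ∀ v ∉ ({y} : Set V), weightedLaplacian w f v ≤ 0 := fun v hv => by
    rw [hf, Pi.sub_apply, Pi.single_eq_of_ne hv, zero_sub, neg_nonpos]
    exact hδ z v
  have hsuper : ∀ v ∉ ({z} : Set V), 0 ≤ weightedLaplacian w f v := fun v hv => by
    rw [hf, Pi.sub_apply, Pi.single_eq_of_ne hv, sub_zero]
    exact hδ y v
  obtain ⟨_, rfl, hmin⟩ :=
    exists_mem_le_of_weightedLaplacian_nonneg hw (fun v => ⟨z, Set.mem_singleton z, hz v⟩) hsuper x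
  obtain ⟨_, rfl, hmax⟩ :=
    exists_mem_ge_of_weightedLaplacian_nonpos hw (fun v => ⟨y, Set.mem_singleton y, hy v⟩) hsub x
  exact ⟨hmin, hmax⟩

end WeightedLaplacian

/-- The voltage function grounded at the sink `z` for unit current from `y` to `z`
attains its minimum `0` at `z` and its maximum at the source `y`. -/
theorem stmt_2 {V : Type*} [Fintype V] [Nonempty V] [DecidableEq V]
    (w : V → V → ℝ)
    (hsymm : ∀ x y, w x y = w y x)
    (hnonneg : ∀ x y, 0 ≤ w x y)
    (hdiag : ∀ x, w x x = 0)
    (L : (V → ℝ) → (V → ℝ))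
    (hL : ∀ f x, L f x = ∑ y', w x y' * (f x - f y'))
    (G : SimpleGraph V)
    (hG : ∀ x y, G.Adj x y ↔ x ≠ y ∧ 0 < w x y)
    (hconn : G.Connected)
    (y z : V) (j : V → ℝ)
    (hj : L j = (fun x => (if x = y then (1 : ℝ) else 0) - (if x = z then (1 : ℝ) else 0)))
    (hjz : j z = 0) :
    ∀ x : V, 0 ≤ j x ∧ j x ≤ j y := by
  have hreach (u v : V) : Relation.ReflTransGen (0 < w · ·) u v :=
    Relation.ReflTransGen.mono (fun a b hab => ((hG a b).1 hab).2) _ _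
      ((SimpleGraph.reachable_iff_reflTransGen u v).1 (hconn u v))
  have hlap : weightedLaplacian w j = Pi.single y 1 - Pi.single z 1 := by
    ext x
    rw [weightedLaplacian_apply, ← hL, hj, Pi.sub_apply, Pi.single_apply, Pi.single_apply]
  exact hjz ▸ stmt_2_general hnonneg (hreach · y) (hreach · z) hlap
end

section
/- Let V be a nonempty finite type, let w be a conductance function on V whose support graph G_w is connected, and let L be its weighted Laplacian. Fix four points x, y, z, w₀ ∈ V. If f : V → ℝ satisfies L f = δ_y − δ_z and g : V → ℝ satisfies L g = δ_x − δ_{w₀}, then f x − f w₀ = g y − g z (the four-point "Magical Identity" for voltage functions: j_z^y(x) − j_z^y(w₀) = j_{w₀}^x(y) − j_{w₀}^x(z)). -/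
/-!
The Laplacian matrix `L = D - W` of a network is symmetric, so `f ⬝ᵥ L g = g ⬝ᵥ L f`. Pairing `f`
with `L g = δ_x - δ_{w₀}` reads off `f x - f w₀`, and pairing `g` with `L f = δ_y - δ_z` reads off
`g y - g z`.
-/

open Finset

open scoped Matrix

theorem dotProduct_single_one_sub_single_one {n R : Type*} [Fintype n] [DecidableEq n]
    [NonAssocRing R] (v : n → R) (i j : n) :
    v ⬝ᵥ (Pi.single i 1 - Pi.single j 1) = v i - v j := by
  rw [dotProduct_sub, dotProduct_single_one, dotProduct_single_one]

theorem sub_eq_sub_of_mulVec_eq_of_transpose_mulVec_eq {m n R : Type*} [Fintype m] [Fintype n]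
    [DecidableEq m] [DecidableEq n] [CommRing R] {A : Matrix m n R} {f : n → R} {g : m → R}
    {i i' : m} {j j' : n} (hf : A *ᵥ f = Pi.single i 1 - Pi.single i' 1)
    (hg : Aᵀ *ᵥ g = Pi.single j 1 - Pi.single j' 1) :
    f j - f j' = g i - g i' :=
  calc
    f j - f j' = f ⬝ᵥ Aᵀ *ᵥ g := by rw [hg, dotProduct_single_one_sub_single_one]
    _ = g ⬝ᵥ A *ᵥ f := Matrix.dotProduct_transpose_mulVec A f g
    _ = g i - g i' := by rw [hf, dotProduct_single_one_sub_single_one]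

section WeightedLaplacian

variable {V R : Type*} [Fintype V] [DecidableEq V]

/-- The Laplacian matrix `D - W` of the network on `V` with conductance matrix `W`, where `D` is
the diagonal matrix of the row sums of `W`. The diagonal entries of `W` cancel. -/
def weightedLapMatrix [AddCommGroup R] (W : Matrix V V R) : Matrix V V R :=
  Matrix.diagonal (fun x ↦ ∑ y, W x y) - W

theorem weightedLapMatrix_mulVec_apply [NonUnitalNonAssocRing R] (W : Matrix V V R) (f : V → R)
    (x : V) : (weightedLapMatrix W *ᵥ f) x = ∑ y, W x y * (f x - f y) := by
  rw [weightedLapMatrix, Matrix.sub_mulVec, Pi.sub_apply, Matrix.mulVec_diagonal, sum_mul]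
  simp only [Matrix.mulVec, dotProduct, mul_sub, sum_sub_distrib]

theorem isSymm_weightedLapMatrix [AddCommGroup R] {W : Matrix V V R} (hW : W.IsSymm) :
    (weightedLapMatrix W).IsSymm :=
  (Matrix.isSymm_diagonal _).sub hW

end WeightedLaplacian

theorem stmt_4_general {V R : Type*} [Fintype V] [DecidableEq V] [CommRing R]
    (w : V → V → R)
    (hsymm : ∀ x y, w x y = w y x)
    (L : (V → R) → (V → R))
    (hL : ∀ f x, L f x = ∑ y', w x y' * (f x - f y'))
    (x y z w₀ : V) (f g : V → R)
    (hf : L f = (fun t => (if t = y then (1 : R) else 0) - (if t = z then (1 : R) else 0)))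
    (hg : L g = (fun t => (if t = x then (1 : R) else 0) - (if t = w₀ then (1 : R) else 0))) :
    f x - f w₀ = g y - g z := by
  have mulVec_eq (h : V → R) : weightedLapMatrix (.of w) *ᵥ h = L h := by
    ext t
    rw [weightedLapMatrix_mulVec_apply, hL]
    simp only [Matrix.of_apply]
  have transpose_eq : (weightedLapMatrix (.of w))ᵀ = weightedLapMatrix (.of w) :=
    isSymm_weightedLapMatrix (Matrix.IsSymm.ext fun a b ↦ hsymm b a)
  have dipole_eq (a b : V) : (fun t ↦ (if t = a then (1 : R) else 0) - (if t = b then 1 else 0)) =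
      Pi.single a 1 - Pi.single b 1 := by
    ext t
    simp only [Pi.sub_apply, Pi.single_apply]
  apply sub_eq_sub_of_mulVec_eq_of_transpose_mulVec_eq (A := weightedLapMatrix (.of w))
  · rw [mulVec_eq, hf, dipole_eq]
  · rw [transpose_eq, mulVec_eq, hg, dipole_eq]

/-- The four-point "Magical Identity" for voltage functions:
`j_z^y(x) − j_z^y(w₀) = j_{w₀}^x(y) − j_{w₀}^x(z)`. -/
theorem stmt_4 {V : Type*} [Fintype V] [Nonempty V] [DecidableEq V]
    (w : V → V → ℝ)
    (hsymm : ∀ x y, w x y = w y x)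
    (hnonneg : ∀ x y, 0 ≤ w x y)
    (hdiag : ∀ x, w x x = 0)
    (L : (V → ℝ) → (V → ℝ))
    (hL : ∀ f x, L f x = ∑ y', w x y' * (f x - f y'))
    (G : SimpleGraph V)
    (hG : ∀ x y, G.Adj x y ↔ x ≠ y ∧ 0 < w x y)
    (hconn : G.Connected)
    (x y z w₀ : V) (f g : V → ℝ)
    (hf : L f = (fun t => (if t = y then (1 : ℝ) else 0) - (if t = z then (1 : ℝ) else 0)))
    (hg : L g = (fun t => (if t = x then (1 : ℝ) else 0) - (if t = w₀ then (1 : ℝ) else 0))) :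
    f x - f w₀ = g y - g z :=
  stmt_4_general w hsymm L hL x y z w₀ f g hf hg
end

section
/- Slope–current principle: Let V be a nonempty finite type, let w be a conductance function on V whose support graph G_w is connected, and let L be its weighted Laplacian. Let d ≥ 0 and let D⁺, D⁻ : V → ℝ be nonnegative functions with ∑_{x ∈ V} D⁺ x = ∑_{x ∈ V} D⁻ x = d. If f : V → ℝ satisfies L f = D⁺ − D⁻, then for all x, y ∈ V the current through the edge {x, y} is bounded by the total injected current: w x y * |f x − f y| ≤ d. -/
open Finset

/-!
Current flows downhill in the potential `f`. If `f y < f x`, cut the network along the superlevel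
set `S = {z | f x ≤ f z}`. The currents inside `S` cancel in pairs, so the net current injected
into `S` equals the total current leaving it. All currents across the cut point outward, and the
one from `x` to `y` is among them, so it is at most the current injected into `S`, hence at most
the total injected current.
-/

section AntisymmetricFlow

variable {V M : Type*} {j : V → V → M}

lemma sum_sum_eq_zero_of_antisymm [AddCommGroup M] [IsAddTorsionFree M]
    (hj : ∀ x y, j y x = -j x y) (S : Finset V) : ∑ x ∈ S, ∑ y ∈ S, j x y = 0 := by
  refine self_eq_neg.1 ?_
  calc ∑ x ∈ S, ∑ y ∈ S, j x y = ∑ x ∈ S, ∑ y ∈ S, j y x := sum_comm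
    _ = -∑ x ∈ S, ∑ y ∈ S, j x y := by simp only [← sum_neg_distrib, ← hj]

variable [Fintype V]

lemma sum_sum_univ_eq_sum_sum_compl_of_antisymm [DecidableEq V] [AddCommGroup M]
    [IsAddTorsionFree M] (hj : ∀ x y, j y x = -j x y) (S : Finset V) :
    ∑ x ∈ S, ∑ y, j x y = ∑ x ∈ S, ∑ y ∈ Sᶜ, j x y := by
  calc ∑ x ∈ S, ∑ y, j x y = ∑ x ∈ S, ∑ y ∈ S, j x y + ∑ x ∈ S, ∑ y ∈ Sᶜ, j x y := by
        simp only [← sum_add_distrib, sum_add_sum_compl]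
    _ = ∑ x ∈ S, ∑ y ∈ Sᶜ, j x y := by rw [sum_sum_eq_zero_of_antisymm hj, zero_add]

lemma le_sum_sum_univ_of_outward [AddCommGroup M] [PartialOrder M] [IsOrderedAddMonoid M]
    [IsAddTorsionFree M] (hj : ∀ x y, j y x = -j x y) {S : Finset V}
    (hout : ∀ x ∈ S, ∀ y ∉ S, 0 ≤ j x y) {x y : V} (hx : x ∈ S) (hy : y ∉ S) :
    j x y ≤ ∑ z ∈ S, ∑ u, j z u := by
  classical
  have hout' : ∀ z ∈ S, ∀ u ∈ Sᶜ, 0 ≤ j z u := fun z hz u hu => hout z hz u (mem_compl.1 hu)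
  calc j x y ≤ ∑ u ∈ Sᶜ, j x u := single_le_sum (hout' x hx) (mem_compl.2 hy)
    _ ≤ ∑ z ∈ S, ∑ u ∈ Sᶜ, j z u :=
      single_le_sum (f := fun z => ∑ u ∈ Sᶜ, j z u) (fun z hz => sum_nonneg (hout' z hz)) hx
    _ = ∑ z ∈ S, ∑ u, j z u := (sum_sum_univ_eq_sum_sum_compl_of_antisymm hj S).symm

variable [AddCommGroup M] [LinearOrder M] [IsOrderedAddMonoid M]
  {P : Type*} [LinearOrder P] {f : V → P} {D : V → M}

lemma le_sum_of_downhill (hj : ∀ x y, j y x = -j x y) (hdown : ∀ x y, f y ≤ f x → 0 ≤ j x y)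
    (hD : ∀ x, 0 ≤ D x) (hjD : ∀ x, ∑ y, j x y ≤ D x) (x y : V) : j x y ≤ ∑ z, D z := by
  rcases le_or_gt (f x) (f y) with hxy | hyx
  · have huphill : j x y ≤ 0 := by simpa only [hj x y, neg_nonneg] using hdown y x hxy
    exact huphill.trans (sum_nonneg fun z _ => hD z)
  · have hout : ∀ z ∈ ({z | f x ≤ f z} : Finset V), ∀ u ∉ ({z | f x ≤ f z} : Finset V),
        0 ≤ j z u := by
      simp only [mem_filter_univ, not_le]
      exact fun z hz u hu => hdown z u (hu.le.trans hz)
    calc j x y ≤ ∑ z with f x ≤ f z, ∑ u, j z u :=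
          le_sum_sum_univ_of_outward hj hout (by simp) (by simpa using hyx)
      _ ≤ ∑ z with f x ≤ f z, D z := sum_le_sum fun z _ => hjD z
      _ ≤ ∑ z, D z := sum_le_univ_sum_of_nonneg hD

lemma abs_le_sum_of_downhill (hj : ∀ x y, j y x = -j x y)
    (hdown : ∀ x y, f y ≤ f x → 0 ≤ j x y) (hD : ∀ x, 0 ≤ D x)
    (hjD : ∀ x, ∑ y, j x y ≤ D x) (x y : V) : |j x y| ≤ ∑ z, D z :=
  abs_le'.2 ⟨le_sum_of_downhill hj hdown hD hjD x y,
    hj x y ▸ le_sum_of_downhill hj hdown hD hjD y x⟩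

end AntisymmetricFlow

theorem stmt_5_general {V R : Type*} [Fintype V] [Ring R] [LinearOrder R] [IsOrderedRing R]
    {w : V → V → R} (hsymm : ∀ x y, w x y = w y x) (hnonneg : ∀ x y, 0 ≤ w x y)
    {D : V → R} (hD : ∀ x, 0 ≤ D x) {f : V → R}
    (hf : ∀ x, ∑ y, w x y * (f x - f y) ≤ D x) (x y : V) :
    w x y * |f x - f y| ≤ ∑ z, D z := by
  have hanti (x y : V) : w y x * (f y - f x) = -(w x y * (f x - f y)) := by
    rw [hsymm y x, ← mul_neg, neg_sub]
  have hdown (x y : V) (hyx : f y ≤ f x) : 0 ≤ w x y * (f x - f y) :=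
    mul_nonneg (hnonneg x y) (sub_nonneg.2 hyx)
  calc w x y * |f x - f y| = |w x y * (f x - f y)| := by
        rw [abs_mul, abs_of_nonneg (hnonneg x y)]
    _ ≤ ∑ z, D z := abs_le_sum_of_downhill hanti hdown hD hf x y

/-- Slope–current principle: if `L f = D⁺ − D⁻` where `D⁺, D⁻ ≥ 0` both have total mass `d`,
then the current through any edge is at most the total injected current `d`. -/
theorem stmt_5 {V : Type*} [Fintype V] [Nonempty V]
    (w : V → V → ℝ)
    (hsymm : ∀ x y, w x y = w y x)
    (hnonneg : ∀ x y, 0 ≤ w x y)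
    (hdiag : ∀ x, w x x = 0)
    (L : (V → ℝ) → (V → ℝ))
    (hL : ∀ f x, L f x = ∑ y', w x y' * (f x - f y'))
    (G : SimpleGraph V)
    (hG : ∀ x y, G.Adj x y ↔ x ≠ y ∧ 0 < w x y)
    (hconn : G.Connected)
    (d : ℝ) (hd : 0 ≤ d)
    (Dplus Dminus : V → ℝ)
    (hDplus : ∀ x, 0 ≤ Dplus x) (hDminus : ∀ x, 0 ≤ Dminus x)
    (hdplus : ∑ x, Dplus x = d) (hdminus : ∑ x, Dminus x = d)
    (f : V → ℝ) (hf : L f = fun x => Dplus x - Dminus x) :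
    ∀ x y : V, w x y * |f x - f y| ≤ d := by
  have hflow (x : V) : ∑ y, w x y * (f x - f y) ≤ Dplus x := by
    simpa only [← hL, hf] using sub_le_self (Dplus x) (hDminus x)
  exact hdplus ▸ stmt_5_general hsymm hnonneg hDplus hflow
end
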